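/- The Cayley calibration is Spin(7)-invariant: for every g ∈ Spin(7) and all w, x, y, z ∈ 𝕆 one has Φ(g(w), g(x), g(y), g(z)) = Φ(w, x, y, z). -/

import Mathlib

open scoped InnerProductSpace

/-!
Polarizing `‖x y‖ = ‖x‖ ‖y‖` gives `⟪x y, z w⟫ + ⟪x w, z y⟫ = 2 ⟪x, z⟫ ⟪y, w⟫`. Hence, writing `x̄`
for the conjugate of `x`, multiplication by `a` on either side has multiplication by `ā` as its
adjoint, and `ā (u z) + ū (a z) = 2 ⟪a, u⟫ z`. Let `u` be imaginary and `a = x ȳ`. The polarized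
identity and `u (u y) = -‖u‖² y` show that `u x` times the conjugate of `u y` is
`2 ⟪a, u⟫ u + ‖u‖² ā`; multiplying by `u z` on the right, the exchange relation turns this into
`‖u‖² u (a z)`. Thus left multiplication by `u` commutes with the triple cross product when
`‖u‖ = 1`, and as it is also orthogonal it preserves the Cayley form.
-/

section Polarization

variable {E F G : Type*} [NormedAddCommGroup E] [InnerProductSpace ℝ E]
  [NormedAddCommGroup F] [InnerProductSpace ℝ F] [NormedAddCommGroup G] [InnerProductSpace ℝ G]

theorem inner_map_map_of_norm_map_eq_mul {f : E →ₗ[ℝ] F} {c : ℝ} (hf : ∀ x, ‖f x‖ = c * ‖x‖)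
    (x y : E) : ⟪f x, f y⟫_ℝ = c ^ 2 * ⟪x, y⟫_ℝ := by
  have hadd := norm_add_sq_real (f x) (f y)
  rw [← map_add, hf, hf, hf] at hadd
  linear_combination (-1 / 2 : ℝ) * hadd + (1 / 2 : ℝ) * c ^ 2 * norm_add_sq_real x y

theorem inner_map₂_add_inner_map₂_swap {B : E →ₗ[ℝ] F →ₗ[ℝ] G}
    (hB : ∀ x y, ‖B x y‖ = ‖x‖ * ‖y‖) (x z : E) (y w : F) :
    ⟪B x y, B z w⟫_ℝ + ⟪B x w, B z y⟫_ℝ = 2 * ⟪x, z⟫_ℝ * ⟪y, w⟫_ℝ := by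
  have hinner (v : E) : ⟪B v y, B v w⟫_ℝ = ‖v‖ ^ 2 * ⟪y, w⟫_ℝ :=
    inner_map_map_of_norm_map_eq_mul (hB v) y w
  have hadd := hinner (x + z)
  simp only [norm_add_sq_real, map_add, LinearMap.add_apply, inner_add_left, inner_add_right]
    at hadd
  rw [real_inner_comm (B x w) (B z y)] at hadd
  linear_combination hadd - hinner x - hinner z

end Polarization

section CompositionAlgebra

variable {O : Type*} [NormedAddCommGroup O] [InnerProductSpace ℝ O]

/-- The bilinear product `mul` with unit `e` makes `O` a unital real composition algebra: the norm
is multiplicative. The field `norm_unit` excludes the zero algebra. -/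
structure IsUnitalComposition (mul : O →ₗ[ℝ] O →ₗ[ℝ] O) (e : O) : Prop where
  norm_unit : ‖e‖ = 1
  unit_mul (x : O) : mul e x = x
  mul_unit (x : O) : mul x e = x
  norm_mul (x y : O) : ‖mul x y‖ = ‖x‖ * ‖y‖

/-- The conjugate `x̄` of `x` with respect to the unit `e`: it fixes the line `ℝ e` and negates its
orthogonal complement, the imaginary vectors. -/
def unitConj (e x : O) : O := (2 * ⟪x, e⟫_ℝ) • e - x

/-- The triple cross product `x × y × z = ½ ((x ȳ) z - (z ȳ) x)`. -/
noncomputable def tripleCross (mul : O →ₗ[ℝ] O →ₗ[ℝ] O) (e x y z : O) : O :=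
  (1 / 2 : ℝ) • (mul (mul x (unitConj e y)) z - mul (mul z (unitConj e y)) x)

/-- The Cayley form `Φ(w, x, y, z) = ⟪w, x × y × z⟫`. -/
noncomputable def cayleyForm (mul : O →ₗ[ℝ] O →ₗ[ℝ] O) (e w x y z : O) : ℝ :=
  ⟪w, tripleCross mul e x y z⟫_ℝ

/-- The group generated by the left multiplications by imaginary unit vectors, which is `Spin(7)`
for the octonions. -/
def imaginarySpinGroup (mul : O →ₗ[ℝ] O →ₗ[ℝ] O) (e : O) : Subgroup (O ≃ₗ[ℝ] O) :=
  Subgroup.closure {g | ∃ u : O, ⟪u, e⟫_ℝ = 0 ∧ ‖u‖ = 1 ∧ ∀ x : O, g x = mul u x}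

theorem unitConj_eq_neg {e x : O} (hx : ⟪x, e⟫_ℝ = 0) : unitConj e x = -x := by
  simp [unitConj, hx]

theorem inner_unitConj_left (e x y : O) : ⟪unitConj e x, y⟫_ℝ = ⟪x, unitConj e y⟫_ℝ := by
  simp only [unitConj, inner_sub_left, inner_sub_right, real_inner_smul_left,
    real_inner_smul_right, real_inner_comm y e]
  ring

theorem unitConj_unitConj {e : O} (he : ‖e‖ = 1) (x : O) : unitConj e (unitConj e x) = x := by
  simp only [unitConj, inner_sub_left, real_inner_smul_left, real_inner_self_eq_norm_sq, he]
  module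

namespace IsUnitalComposition

variable {mul : O →ₗ[ℝ] O →ₗ[ℝ] O} {e : O}

theorem inner_mul_eq_inner_unitConj_mul (h : IsUnitalComposition mul e) (a x y : O) :
    ⟪mul a x, y⟫_ℝ = ⟪x, mul (unitConj e a) y⟫_ℝ := by
  have hpol := inner_map₂_add_inner_map₂_swap h.norm_mul a e x y
  rw [h.unit_mul, h.unit_mul, real_inner_comm x (mul a y)] at hpol
  simp only [unitConj, map_sub, map_smul, LinearMap.sub_apply, LinearMap.smul_apply, h.unit_mul,
    inner_sub_right, real_inner_smul_right]
  linear_combination hpol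

theorem inner_mul_eq_inner_mul_unitConj (h : IsUnitalComposition mul e) (a x y : O) :
    ⟪mul x a, y⟫_ℝ = ⟪x, mul y (unitConj e a)⟫_ℝ := by
  have hpol := inner_map₂_add_inner_map₂_swap h.norm_mul x y a e
  rw [h.mul_unit, h.mul_unit] at hpol
  simp only [unitConj, map_sub, map_smul, h.mul_unit, inner_sub_right, real_inner_smul_right]
  linear_combination hpol

theorem inner_mul_unitConj (h : IsUnitalComposition mul e) (x y z : O) :
    ⟪mul x (unitConj e y), z⟫_ℝ = ⟪x, mul z y⟫_ℝ := by
  rw [h.inner_mul_eq_inner_mul_unitConj, unitConj_unitConj h.norm_unit]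

theorem inner_unitConj_mul (h : IsUnitalComposition mul e) (x y z : O) :
    ⟪mul (unitConj e x) y, z⟫_ℝ = ⟪y, mul x z⟫_ℝ := by
  rw [h.inner_mul_eq_inner_unitConj_mul, unitConj_unitConj h.norm_unit]

theorem unitConj_mul (h : IsUnitalComposition mul e) (x y : O) :
    unitConj e (mul x y) = mul (unitConj e y) (unitConj e x) := by
  refine ext_inner_right ℝ fun t => ?_
  calc ⟪unitConj e (mul x y), t⟫_ℝ
      = ⟪y, mul (unitConj e x) (unitConj e t)⟫_ℝ := by
        rw [inner_unitConj_left, h.inner_mul_eq_inner_unitConj_mul]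
    _ = ⟪mul y t, unitConj e x⟫_ℝ := (h.inner_mul_eq_inner_mul_unitConj t y _).symm
    _ = ⟪mul (unitConj e y) (unitConj e x), t⟫_ℝ := by
        rw [h.inner_unitConj_mul, real_inner_comm]

theorem unitConj_mul_mul_add_swap (h : IsUnitalComposition mul e) (a u z : O) :
    mul (unitConj e a) (mul u z) + mul (unitConj e u) (mul a z) = (2 * ⟪a, u⟫_ℝ) • z := by
  refine ext_inner_right ℝ fun t => ?_
  have hpol := inner_map₂_add_inner_map₂_swap h.norm_mul a u z t
  rw [real_inner_comm (mul u z) (mul a t)] at hpol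
  rw [inner_add_left, h.inner_unitConj_mul, h.inner_unitConj_mul, real_inner_smul_left]
  linear_combination hpol

theorem mul_mul_self_of_inner_eq_zero (h : IsUnitalComposition mul e) {u : O}
    (hu : ⟪u, e⟫_ℝ = 0) (x : O) : mul u (mul u x) = -(‖u‖ ^ 2 • x) := by
  have hswap := h.unitConj_mul_mul_add_swap u u x
  simp only [unitConj_eq_neg hu, map_neg, LinearMap.neg_apply, real_inner_self_eq_norm_sq]
    at hswap
  linear_combination (norm := module) (-1 / 2 : ℝ) • hswap

theorem mul_mul_unitConj_mul (h : IsUnitalComposition mul e) {u : O} (hu : ⟪u, e⟫_ℝ = 0)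
    (x y : O) :
    mul (mul u x) (unitConj e (mul u y)) =
      (2 * ⟪mul x (unitConj e y), u⟫_ℝ) • u + ‖u‖ ^ 2 • unitConj e (mul x (unitConj e y)) := by
  refine ext_inner_right ℝ fun t => ?_
  have hpol := inner_map₂_add_inner_map₂_swap h.norm_mul u t x (mul u y)
  rw [h.mul_mul_self_of_inner_eq_zero hu, inner_neg_left, real_inner_smul_left] at hpol
  have hconj : unitConj e (mul x (unitConj e y)) = mul y (unitConj e x) := by
    rw [h.unitConj_mul, unitConj_unitConj h.norm_unit]
  rw [hconj, inner_add_left, real_inner_smul_left, real_inner_smul_left, h.inner_mul_unitConj,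
    h.inner_mul_unitConj, h.inner_mul_unitConj]
  linear_combination hpol

theorem mul_mul_unitConj_mul_mul (h : IsUnitalComposition mul e) {u : O} (hu : ⟪u, e⟫_ℝ = 0)
    (x y z : O) :
    mul (mul (mul u x) (unitConj e (mul u y))) (mul u z) =
      ‖u‖ ^ 2 • mul u (mul (mul x (unitConj e y)) z) := by
  set a := mul x (unitConj e y) with ha
  have hswap : mul (unitConj e a) (mul u z) - mul u (mul a z) = (2 * ⟪a, u⟫_ℝ) • z := by
    simpa [unitConj_eq_neg hu, sub_eq_add_neg] using h.unitConj_mul_mul_add_swap a u z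
  calc mul (mul (mul u x) (unitConj e (mul u y))) (mul u z)
      = (2 * ⟪a, u⟫_ℝ) • mul u (mul u z) + ‖u‖ ^ 2 • mul (unitConj e a) (mul u z) := by
        simp only [h.mul_mul_unitConj_mul hu, ← ha, map_add, map_smul, LinearMap.add_apply,
          LinearMap.smul_apply]
    _ = ‖u‖ ^ 2 • (mul (unitConj e a) (mul u z) - (2 * ⟪a, u⟫_ℝ) • z) := by
        rw [h.mul_mul_self_of_inner_eq_zero hu]
        module
    _ = ‖u‖ ^ 2 • mul u (mul a z) := by rw [← hswap, sub_sub_cancel]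

theorem tripleCross_mul_left (h : IsUnitalComposition mul e) {u : O} (hu : ⟪u, e⟫_ℝ = 0)
    (x y z : O) :
    tripleCross mul e (mul u x) (mul u y) (mul u z) =
      ‖u‖ ^ 2 • mul u (tripleCross mul e x y z) := by
  simp only [tripleCross, h.mul_mul_unitConj_mul_mul hu, map_smul, map_sub]
  module

theorem cayleyForm_mul_left (h : IsUnitalComposition mul e) {u : O} (hu : ⟪u, e⟫_ℝ = 0)
    (w x y z : O) :
    cayleyForm mul e (mul u w) (mul u x) (mul u y) (mul u z) =
      ‖u‖ ^ 4 * cayleyForm mul e w x y z := by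
  simp only [cayleyForm, h.tripleCross_mul_left hu, real_inner_smul_right,
    inner_map_map_of_norm_map_eq_mul (h.norm_mul u)]
  ring

end IsUnitalComposition

theorem cayley_calibration_spin7_invariant_general {mul : O →ₗ[ℝ] O →ₗ[ℝ] O} {e : O}
    (h : IsUnitalComposition mul e) :
    ∀ g ∈ imaginarySpinGroup mul e, ∀ w x y z : O,
      cayleyForm mul e (g w) (g x) (g y) (g z) = cayleyForm mul e w x y z := by
  intro g hg
  induction hg using Subgroup.closure_induction with
  | mem g hg =>
    obtain ⟨u, hu, hnorm, hg⟩ := hg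
    simp [hg, h.cayleyForm_mul_left hu, hnorm]
  | one => simp
  | mul a b _ _ ha hb => simp [ha, hb]
  | inv a _ ha =>
    intro w x y z
    simpa using (ha (a⁻¹ w) (a⁻¹ x) (a⁻¹ y) (a⁻¹ z)).symm

end CompositionAlgebra

/-- The Cayley calibration `Φ(w,x,y,z) = ⟨w, x × y × z⟩` is
`Spin(7)`-invariant: `Φ(g w, g x, g y, g z) = Φ(w, x, y, z)` for all `g ∈ Spin(7)`. -/
theorem cayley_calibration_spin7_invariant
    {O : Type*} [NormedAddCommGroup O] [InnerProductSpace ℝ O]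
    (hdim : Module.finrank ℝ O = 8)
    (mul : O →ₗ[ℝ] O →ₗ[ℝ] O) (e : O) (he : ‖e‖ = 1)
    (unit_left : ∀ x : O, mul e x = x) (unit_right : ∀ x : O, mul x e = x)
    (norm_mul : ∀ x y : O, ‖mul x y‖ = ‖x‖ * ‖y‖)
    (conj : O → O) (hconj : ∀ x : O, conj x = (2 * ⟪x, e⟫_ℝ) • e - x)
    (cross : O → O → O → O)
    (hcross : ∀ x y z : O,
      cross x y z = (1 / 2 : ℝ) • (mul (mul x (conj y)) z - mul (mul z (conj y)) x))
    (Phi : O → O → O → O → ℝ)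
    (hPhi : ∀ w x y z : O, Phi w x y z = ⟪w, cross x y z⟫_ℝ)
    (Spin7 : Subgroup (O ≃ₗ[ℝ] O))
    (hSpin7 : Spin7 = Subgroup.closure
      {g : O ≃ₗ[ℝ] O | ∃ u : O, ⟪u, e⟫_ℝ = 0 ∧ ‖u‖ = 1 ∧ ∀ x : O, g x = mul u x}) :
    ∀ g ∈ Spin7, ∀ w x y z : O, Phi (g w) (g x) (g y) (g z) = Phi w x y z := by
  simp only [hPhi, hcross, hconj, hSpin7]
  exact cayley_calibration_spin7_invariant_general ⟨he, unit_left, unit_right, norm_mul⟩
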